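/- Let K := Σ_{k=0}^∞ (−1)^k/(2k+1)² be the Catalan constant. Then (π/2) · ∫₀^∞ (x²/(1+x²)) · cosh(πx/2) / sinh²(πx/2) dx = 2K − 1; that is, the Nevanlinna measure ρ(dx) = (π/4)·(x²/(1+x²))·cosh(πx/2)/sinh²(πx/2) dx on ℝ of the free-probability analogue of the background driving Lévy process of the hyperbolic cosine distribution has total mass 2K − 1. -/

import Mathlib

open MeasureTheory Set

/-- The Catalan constant `K = Σ_{k≥0} (−1)^k/(2k+1)²`. -/
noncomputable def catalanConstant : ℝ :=
  ∑' k : ℕ, (-1 : ℝ) ^ k / (2 * k + 1) ^ 2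

/-!
Integrating by parts against `-1 / sinh (π b x)` turns the integral, at frequency `π b`, into
`∫ 2 x / (1 + x²)² / sinh (π b x)`. Expanding `π / sinh` into partial fractions over `ℤ` leaves
rational integrals which, by `∫₀^∞ x² / ((1 + x²)² (x² + a²)) dx = π / (4 (1 + a)²)` with
`a = |n| / b`, add up to `(b / 2) ∑_{n ∈ ℤ} (-1)ⁿ / (|n| + b)²`. At `b = 1 / 2` this is `2 K - 1`.
-/

open Filter Topology Real

lemma hasSum_int_of_even {G : Type*} [AddCommGroup G] [TopologicalSpace G]
    [IsTopologicalAddGroup G] {f : ℤ → G} {a : G} (hf : f.Even)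
    (ha : HasSum (fun n : ℕ => f n) a) :
    HasSum f (a + a - f 0) :=
  ha.of_nat_of_neg (by simpa only [hf _] using ha)

lemma hasSum_pi_mul_cot {z : ℂ} (hz : z ∈ Complex.integerComplement) :
    HasSum (fun n : ℤ => z / (z ^ 2 - n ^ 2)) (π * Complex.cot (π * z)) := by
  have hcot : HasSum (fun n : ℕ => cotTerm z n / 2) ((π * Complex.cot (π * z) - 1 / z) / 2) :=
    ((summable_cotTerm hz).hasSum_iff_tendsto_nat.2 (tendsto_logDeriv_euler_cot_sub hz)).div_const 2
  have hnat : HasSum (fun n : ℕ => z / (z ^ 2 - ((n : ℤ) : ℂ) ^ 2))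
      ((π * Complex.cot (π * z) - 1 / z) / 2 + 1 / z) := by
    rw [← hasSum_nat_add_iff' 1]
    convert! hcot using 1
    · ext n
      rw [cotTerm_identity hz]
      push_cast
      ring
    · simp [sq]
  have heven : Function.Even fun n : ℤ => z / (z ^ 2 - (n : ℂ) ^ 2) := fun n => by simp
  convert! hasSum_int_of_even heven hnat using 1
  have hzero : z / (z ^ 2 - ((0 : ℤ) : ℂ) ^ 2) = 1 / z := by simp [sq]
  rw [hzero]
  ring

lemma cot_sub_cot_two_mul {w : ℂ} (hw : Complex.sin (2 * w) ≠ 0) :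
    Complex.cot w - Complex.cot (2 * w) = 1 / Complex.sin (2 * w) := by
  rw [Complex.sin_two_mul] at hw
  have hsin : Complex.sin w ≠ 0 := right_ne_zero_of_mul (left_ne_zero_of_mul hw)
  have hcos : Complex.cos w ≠ 0 := right_ne_zero_of_mul hw
  rw [Complex.cot, Complex.cot, Complex.sin_two_mul, Complex.cos_two_mul]
  field_simp
  ring

lemma hasSum_pi_div_sin {z : ℂ} (hz : z ∈ Complex.integerComplement) :
    HasSum (fun n : ℤ => (-1) ^ n * (z / (z ^ 2 - n ^ 2))) (π / Complex.sin (π * z)) := by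
  have hz2 : z / 2 ∈ Complex.integerComplement := by
    rintro ⟨n, hn⟩
    exact hz ⟨2 * n, by push_cast; linear_combination 2 * hn⟩
  have heven : HasSum (fun n : ℤ => if Even n then 2 * (z / (z ^ 2 - n ^ 2)) else 0)
      (π * Complex.cot (π * (z / 2))) := by
    rw [← (mul_right_injective₀ (two_ne_zero' ℤ)).hasSum_iff]
    · refine (hasSum_pi_mul_cot hz2).congr_fun fun n => ?_
      have hden : z ^ 2 - (2 * n : ℂ) ^ 2 = 4 * ((z / 2) ^ 2 - n ^ 2) := by ring
      simp only [Function.comp_apply, even_two_mul, if_true, Int.cast_mul, Int.cast_ofNat, hden,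
        ← div_div]
      ring
    · rintro n hn
      exact if_neg fun ⟨m, hm⟩ => hn ⟨m, by simp only; omega⟩
  convert! heven.sub (hasSum_pi_mul_cot hz) using 1
  · ext n
    rcases Int.even_or_odd n with hn | hn
    · simp only [hn.neg_one_zpow, hn, if_true]
      ring
    · simp only [hn.neg_one_zpow, Int.not_even_iff_odd.2 hn, if_false]
      ring
  · have hdouble : π * z = 2 * (π * (z / 2)) := by ring
    have hsin : Complex.sin (2 * (π * (z / 2))) ≠ 0 := hdouble ▸ sin_pi_mul_ne_zero hz
    rw [hdouble, ← mul_sub, cot_sub_cot_two_mul hsin, mul_one_div]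

lemma hasSum_pi_div_sinh {x : ℝ} (hx : x ≠ 0) :
    HasSum (fun n : ℤ => (-1) ^ n * (x / (x ^ 2 + n ^ 2))) (π / sinh (π * x)) := by
  have hz : x * Complex.I ∈ Complex.integerComplement := by
    rintro ⟨n, hn⟩
    exact hx (by simpa using (congrArg Complex.im hn).symm)
  rw [← Complex.hasSum_ofReal]
  convert! (hasSum_pi_div_sin hz).mul_left Complex.I using 1
  · ext n
    have : (x * Complex.I) ^ 2 - n ^ 2 = -((x : ℂ) ^ 2 + n ^ 2) := by
      linear_combination (x : ℂ) ^ 2 * Complex.I_sq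
    rw [this, div_neg]
    push_cast
    linear_combination (-1 : ℂ) ^ n * (x / (x ^ 2 + n ^ 2)) * Complex.I_sq
  · rw [← mul_assoc, Complex.sin_mul_I]
    push_cast
    field_simp

lemma hasDerivAt_div_one_add_sq (x : ℝ) :
    HasDerivAt (fun x : ℝ => x / (1 + x ^ 2)) ((1 - x ^ 2) / (1 + x ^ 2) ^ 2) x := by
  have hx : 1 + x ^ 2 ≠ 0 := by positivity
  convert! (hasDerivAt_id' x).div ((hasDerivAt_pow 2 x).const_add 1) hx using 1
  push_cast
  ring

lemma tendsto_div_one_add_sq_atTop : Tendsto (fun x : ℝ => x / (1 + x ^ 2)) atTop (𝓝 0) := by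
  refine squeeze_zero' (g := fun x : ℝ => x⁻¹) ?_ ?_ tendsto_inv_atTop_zero
  · filter_upwards [eventually_gt_atTop 0] with x hx
    positivity
  · filter_upwards [eventually_gt_atTop 0] with x hx
    rw [div_le_iff₀ (by positivity)]
    field_simp
    linarith

lemma integrable_inv_one_add_sq_sq : Integrable fun x : ℝ => ((1 + x ^ 2) ^ 2)⁻¹ := by
  refine integrable_inv_one_add_sq.mono' (by fun_prop) (.of_forall fun x => ?_)
  rw [Real.norm_of_nonneg (by positivity)]
  gcongr
  nlinarith [sq_nonneg x]

lemma integral_Ioi_inv_one_add_sq_sq : ∫ x in Ioi (0 : ℝ), ((1 + x ^ 2) ^ 2)⁻¹ = π / 4 := by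
  have hderiv (x : ℝ) : HasDerivAt (fun x => (arctan x + x / (1 + x ^ 2)) / 2)
      (((1 + x ^ 2) ^ 2)⁻¹) x := by
    convert! ((hasDerivAt_arctan x).add (hasDerivAt_div_one_add_sq x)).div_const 2 using 1
    field_simp
    ring
  have htop : Tendsto (fun x => (arctan x + x / (1 + x ^ 2)) / 2) atTop (𝓝 ((π / 2 + 0) / 2)) :=
    ((tendsto_nhds_of_tendsto_nhdsWithin tendsto_arctan_atTop).add
      tendsto_div_one_add_sq_atTop).div_const 2
  rw [integral_Ioi_of_hasDerivAt_of_tendsto' (fun x _ => hderiv x)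
    integrable_inv_one_add_sq_sq.integrableOn htop, arctan_zero]
  ring

lemma integral_Ioi_inv_one_add_div_sq {a : ℝ} (ha : 0 < a) :
    ∫ x in Ioi (0 : ℝ), (1 + (x / a) ^ 2)⁻¹ = a * (π / 2) := by
  have h := integral_comp_mul_right_Ioi (fun x : ℝ => (1 + x ^ 2)⁻¹) 0 (inv_pos.2 ha)
  simp_rw [zero_mul, integral_Ioi_inv_one_add_sq, ← div_eq_mul_inv] at h
  simpa using h

lemma sq_div_one_add_sq_sq_mul_eq {a : ℝ} (ha0 : a ≠ 0) (ha1 : a ^ 2 ≠ 1) (x : ℝ) :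
    x ^ 2 / ((1 + x ^ 2) ^ 2 * (x ^ 2 + a ^ 2)) =
      a ^ 2 / (a ^ 2 - 1) ^ 2 * (1 + x ^ 2)⁻¹ - 1 / (a ^ 2 - 1) ^ 2 * (1 + (x / a) ^ 2)⁻¹ -
        1 / (a ^ 2 - 1) * ((1 + x ^ 2) ^ 2)⁻¹ := by
  have hsub : a ^ 2 - 1 ≠ 0 := sub_ne_zero.2 ha1
  have hx : x ^ 2 + a ^ 2 ≠ 0 := by positivity
  have hinv : (1 + (x / a) ^ 2)⁻¹ = a ^ 2 / (x ^ 2 + a ^ 2) := by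
    field_simp
    ring
  rw [hinv]
  field_simp
  ring

lemma integral_sq_div_one_add_sq_sq_mul_of_ne_one {a : ℝ} (ha : 0 < a) (ha1 : a ≠ 1) :
    ∫ x in Ioi (0 : ℝ), x ^ 2 / ((1 + x ^ 2) ^ 2 * (x ^ 2 + a ^ 2)) = π / (4 * (1 + a) ^ 2) := by
  have hsq : a ^ 2 ≠ 1 := sq_ne_one_iff.2 ⟨ha1, by linarith⟩
  have hint₁ := integrable_inv_one_add_sq.integrableOn (s := Ioi 0)
  have hint₂ := (integrable_inv_one_add_sq.comp_div ha.ne').integrableOn (s := Ioi 0)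
  have hint₃ := integrable_inv_one_add_sq_sq.integrableOn (s := Ioi 0)
  simp_rw [sq_div_one_add_sq_sq_mul_eq ha.ne' hsq]
  rw [integral_sub ((hint₁.const_mul _).sub' (hint₂.const_mul _)) (hint₃.const_mul _),
    integral_sub (hint₁.const_mul _) (hint₂.const_mul _), integral_const_mul, integral_const_mul,
    integral_const_mul, integral_Ioi_inv_one_add_sq, integral_Ioi_inv_one_add_div_sq ha,
    integral_Ioi_inv_one_add_sq_sq, arctan_zero]
  have hm : a - 1 ≠ 0 := sub_ne_zero.2 ha1
  have hfac : a ^ 2 - 1 = (a - 1) * (1 + a) := by ring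
  rw [hfac]
  field_simp
  ring

lemma sq_div_one_add_sq_sq_mul_le (a x : ℝ) :
    x ^ 2 / ((1 + x ^ 2) ^ 2 * (x ^ 2 + a ^ 2)) ≤ ((1 + x ^ 2) ^ 2)⁻¹ := by
  rw [mul_comm, ← div_div, ← one_div]
  gcongr
  exact div_le_one_of_le₀ (by nlinarith) (by positivity)

lemma integrable_sq_div_one_add_sq_sq_mul (a : ℝ) :
    Integrable fun x : ℝ => x ^ 2 / ((1 + x ^ 2) ^ 2 * (x ^ 2 + a ^ 2)) := by
  refine integrable_inv_one_add_sq_sq.mono' (Measurable.aestronglyMeasurable (by fun_prop))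
    (.of_forall fun x => ?_)
  rw [Real.norm_of_nonneg (by positivity)]
  exact sq_div_one_add_sq_sq_mul_le a x

-- The partial fractions of the integrand degenerate at `a = 0` and `a = 1`; continuity in `a`
-- recovers both values.
lemma continuous_integral_sq_div_one_add_sq_sq_mul :
    Continuous fun a : ℝ =>
      ∫ x in Ioi (0 : ℝ), x ^ 2 / ((1 + x ^ 2) ^ 2 * (x ^ 2 + a ^ 2)) := by
  refine continuous_of_dominated (fun a => (integrable_sq_div_one_add_sq_sq_mul a).1.restrict)
    (fun a => .of_forall fun x => ?_) integrable_inv_one_add_sq_sq.integrableOn ?_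
  · rw [Real.norm_of_nonneg (by positivity)]
    exact sq_div_one_add_sq_sq_mul_le a x
  · filter_upwards [ae_restrict_mem measurableSet_Ioi] with x (hx : 0 < x)
    exact continuous_const.div (by fun_prop) fun a => by positivity

lemma integral_sq_div_one_add_sq_sq_mul {a : ℝ} (ha : 0 ≤ a) :
    ∫ x in Ioi (0 : ℝ), x ^ 2 / ((1 + x ^ 2) ^ 2 * (x ^ 2 + a ^ 2)) = π / (4 * (1 + a) ^ 2) := by
  have hgeneric : EqOn (fun a : ℝ =>
      ∫ x in Ioi (0 : ℝ), x ^ 2 / ((1 + x ^ 2) ^ 2 * (x ^ 2 + a ^ 2)))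
      (fun a => π / (4 * (1 + a) ^ 2)) (Ioi 0 ∩ {1}ᶜ) :=
    fun a ha => integral_sq_div_one_add_sq_sq_mul_of_ne_one ha.1 ha.2
  have hcont : ContinuousOn (fun a : ℝ => π / (4 * (1 + a) ^ 2)) (Ici 0) :=
    continuousOn_const.div (by fun_prop) fun a (ha : 0 ≤ a) => by positivity
  refine hgeneric.of_subset_closure continuous_integral_sq_div_one_add_sq_sq_mul.continuousOn hcont
    (inter_subset_left.trans Ioi_subset_Ici_self) ?_ ha
  rw [← closure_Ioi]
  exact closure_minimal ((dense_compl_singleton (1 : ℝ)).open_subset_closure_inter isOpen_Ioi)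
    isClosed_closure

lemma div_sinh_le_one {y : ℝ} (hy : 0 ≤ y) : y / sinh y ≤ 1 :=
  div_le_one_of_le₀ (self_le_sinh_iff.2 hy) (sinh_nonneg_iff.2 hy)

lemma sq_mul_cosh_le_two_mul_sinh_sq (y : ℝ) : y ^ 2 * cosh y ≤ 2 * sinh y ^ 2 := by
  obtain ⟨t, rfl⟩ : ∃ t, y = 2 * t := ⟨y / 2, by ring⟩
  have hsq : t ^ 2 ≤ sinh t ^ 2 := by
    rw [sq_le_sq, abs_sinh]
    exact self_le_sinh_iff.2 (abs_nonneg t)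
  have hcosh : cosh (2 * t) ≤ 2 * cosh t ^ 2 := by
    rw [cosh_two_mul]
    linarith [cosh_sq t]
  calc (2 * t) ^ 2 * cosh (2 * t) = 4 * (t ^ 2 * cosh (2 * t)) := by ring
    _ ≤ 4 * (sinh t ^ 2 * (2 * cosh t ^ 2)) := by gcongr
    _ = 2 * sinh (2 * t) ^ 2 := by
      rw [sinh_two_mul]
      ring

lemma sq_mul_cosh_div_sinh_sq_le_two (y : ℝ) : y ^ 2 * cosh y / sinh y ^ 2 ≤ 2 :=
  div_le_of_le_mul₀ (sq_nonneg _) zero_le_two (sq_mul_cosh_le_two_mul_sinh_sq y)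

lemma integrableOn_two_mul_div_one_add_sq_sq_div_sinh {c : ℝ} (hc : 0 < c) :
    IntegrableOn (fun x : ℝ => 2 * x / (1 + x ^ 2) ^ 2 / sinh (c * x)) (Ioi 0) := by
  refine (integrable_inv_one_add_sq_sq.integrableOn.const_mul (2 / c)).mono'
    (Measurable.aestronglyMeasurable (by fun_prop)) ?_
  filter_upwards [ae_restrict_mem measurableSet_Ioi] with x (hx : 0 < x)
  have hcx : 0 < c * x := mul_pos hc hx
  have : 0 < sinh (c * x) := sinh_pos_iff.2 hcx
  rw [Real.norm_of_nonneg (by positivity)]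
  calc 2 * x / (1 + x ^ 2) ^ 2 / sinh (c * x)
      = 2 / c * ((1 + x ^ 2) ^ 2)⁻¹ * (c * x / sinh (c * x)) := by field_simp
    _ ≤ 2 / c * ((1 + x ^ 2) ^ 2)⁻¹ :=
      mul_le_of_le_one_right (by positivity) (div_sinh_le_one hcx.le)

lemma integrable_sq_div_one_add_sq_mul_cosh_div_sinh_sq {c : ℝ} (hc : c ≠ 0) :
    Integrable fun x : ℝ => x ^ 2 / (1 + x ^ 2) * (cosh (c * x) / sinh (c * x) ^ 2) := by
  refine (integrable_inv_one_add_sq.const_mul (2 / c ^ 2)).mono'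
    (Measurable.aestronglyMeasurable (by fun_prop)) (.of_forall fun x => ?_)
  have : 0 < cosh (c * x) := cosh_pos _
  rw [Real.norm_of_nonneg (by positivity)]
  calc x ^ 2 / (1 + x ^ 2) * (cosh (c * x) / sinh (c * x) ^ 2)
      = 1 / c ^ 2 * (1 + x ^ 2)⁻¹ * ((c * x) ^ 2 * cosh (c * x) / sinh (c * x) ^ 2) := by
        field_simp
    _ ≤ 1 / c ^ 2 * (1 + x ^ 2)⁻¹ * 2 := by
        gcongr
        exact sq_mul_cosh_div_sinh_sq_le_two _
    _ = 2 / c ^ 2 * (1 + x ^ 2)⁻¹ := by ring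

lemma hasDerivAt_sq_div_one_add_sq_div_sinh {c x : ℝ} (hcx : c * x ≠ 0) :
    HasDerivAt (fun x : ℝ => x ^ 2 / (1 + x ^ 2) / sinh (c * x))
      (2 * x / (1 + x ^ 2) ^ 2 / sinh (c * x) -
        c * (x ^ 2 / (1 + x ^ 2) * (cosh (c * x) / sinh (c * x) ^ 2))) x := by
  have hsinh : sinh (c * x) ≠ 0 := sinh_ne_zero.2 hcx
  have hx : 1 + x ^ 2 ≠ 0 := by positivity
  have hweight : HasDerivAt (fun x : ℝ => x ^ 2 / (1 + x ^ 2)) (2 * x / (1 + x ^ 2) ^ 2) x := by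
    convert! (hasDerivAt_pow 2 x).div ((hasDerivAt_pow 2 x).const_add 1) hx using 1
    push_cast
    ring
  convert! hweight.div ((hasDerivAt_id' x).const_mul c).sinh hsinh using 1
  field_simp

lemma sq_div_one_add_sq_div_sinh_le {c x : ℝ} (hc : 0 < c) (hx : 0 ≤ x) :
    x ^ 2 / (1 + x ^ 2) / sinh (c * x) ≤ c⁻¹ * (x / (1 + x ^ 2)) :=
  calc x ^ 2 / (1 + x ^ 2) / sinh (c * x)
      = c⁻¹ * (x / (1 + x ^ 2)) * (c * x / sinh (c * x)) := by field_simp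
    _ ≤ c⁻¹ * (x / (1 + x ^ 2)) :=
      mul_le_of_le_one_right (by positivity) (div_sinh_le_one (by positivity))

lemma tendsto_sq_div_one_add_sq_div_sinh {c : ℝ} (hc : 0 < c) {l : Filter ℝ}
    (hl : ∀ᶠ x in l, 0 ≤ x) (hlim : Tendsto (fun x : ℝ => x / (1 + x ^ 2)) l (𝓝 0)) :
    Tendsto (fun x : ℝ => x ^ 2 / (1 + x ^ 2) / sinh (c * x)) l (𝓝 0) := by
  refine squeeze_zero' (hl.mono fun x hx => ?_)
    (hl.mono fun x hx => sq_div_one_add_sq_div_sinh_le hc hx) (by simpa using hlim.const_mul c⁻¹)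
  have := sinh_nonneg_iff.2 (mul_nonneg hc.le hx)
  positivity

lemma mul_integral_sq_div_one_add_sq_mul_cosh_div_sinh_sq {c : ℝ} (hc : 0 < c) :
    c * ∫ x in Ioi (0 : ℝ), x ^ 2 / (1 + x ^ 2) * (cosh (c * x) / sinh (c * x) ^ 2) =
      ∫ x in Ioi (0 : ℝ), 2 * x / (1 + x ^ 2) ^ 2 / sinh (c * x) := by
  have hint₁ := integrableOn_two_mul_div_one_add_sq_sq_div_sinh hc
  have hint₂ : IntegrableOn
      (fun x => c * (x ^ 2 / (1 + x ^ 2) * (cosh (c * x) / sinh (c * x) ^ 2))) (Ioi 0) :=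
    ((integrable_sq_div_one_add_sq_mul_cosh_div_sinh_sq hc.ne').const_mul c).integrableOn
  have hcont : ContinuousWithinAt (fun x : ℝ => x ^ 2 / (1 + x ^ 2) / sinh (c * x)) (Ici 0) 0 := by
    have hzero : Tendsto (fun x : ℝ => x / (1 + x ^ 2)) (𝓝[≥] 0) (𝓝 0) := by
      simpa using (hasDerivAt_div_one_add_sq 0).continuousAt.tendsto.mono_left nhdsWithin_le_nhds
    simpa [ContinuousWithinAt] using
      tendsto_sq_div_one_add_sq_div_sinh hc (eventually_mem_nhdsWithin (s := Ici 0)) hzero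
  have hftc := integral_Ioi_of_hasDerivAt_of_tendsto hcont
    (fun x hx => hasDerivAt_sq_div_one_add_sq_div_sinh (mul_pos hc hx).ne') (hint₁.sub' hint₂)
    (tendsto_sq_div_one_add_sq_div_sinh hc (eventually_ge_atTop 0) tendsto_div_one_add_sq_atTop)
  rw [integral_sub hint₁ hint₂, integral_const_mul] at hftc
  simp only [ne_eq, OfNat.ofNat_ne_zero, not_false_eq_true, zero_pow, mul_zero, sinh_zero,
    div_zero, zero_div, sub_self] at hftc
  linarith

lemma summable_inv_abs_int_add_sq (b : ℝ) : Summable fun n : ℤ => ((|(n : ℝ)| + b) ^ 2)⁻¹ := by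
  have hnat : Summable fun n : ℕ => (((n : ℝ) + b) ^ 2)⁻¹ := by
    simpa using (Real.summable_one_div_nat_add_rpow b 2).2 one_lt_two
  exact .of_nat_of_neg (by simpa using hnat) (by simpa using hnat)

lemma hasSum_two_mul_div_one_add_sq_sq_div_sinh {b x : ℝ} (hb : b ≠ 0) (hx : x ≠ 0) :
    HasSum (fun n : ℤ => (-1) ^ n *
        (2 / (π * b) * (x ^ 2 / ((1 + x ^ 2) ^ 2 * (x ^ 2 + (|(n : ℝ)| / b) ^ 2)))))
      (2 * x / (1 + x ^ 2) ^ 2 / sinh (π * b * x)) := by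
  convert! (hasSum_pi_div_sinh (mul_ne_zero hb hx)).mul_left
    (2 * x / (1 + x ^ 2) ^ 2 / π) using 1
  · ext n
    have hden : x ^ 2 + (|(n : ℝ)| / b) ^ 2 = ((b * x) ^ 2 + n ^ 2) / b ^ 2 := by
      rw [div_pow, sq_abs]
      field_simp
    rw [hden]
    field_simp
  · rw [mul_assoc]
    field_simp

lemma hasSum_integral_two_mul_div_one_add_sq_sq_div_sinh {b : ℝ} (hb : 0 < b) :
    HasSum (fun n : ℤ => (-1) ^ n * (b / 2 * ((|(n : ℝ)| + b) ^ 2)⁻¹))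
      (∫ x in Ioi (0 : ℝ), 2 * x / (1 + x ^ 2) ^ 2 / sinh (π * b * x)) := by
  set g : ℤ → ℝ → ℝ := fun n x =>
    2 / (π * b) * (x ^ 2 / ((1 + x ^ 2) ^ 2 * (x ^ 2 + (|(n : ℝ)| / b) ^ 2)))
  have hg_nonneg (n : ℤ) (x : ℝ) : 0 ≤ g n x := by positivity
  have hg_int (n : ℤ) : ∫ x in Ioi (0 : ℝ), g n x = b / 2 * ((|(n : ℝ)| + b) ^ 2)⁻¹ := by
    rw [integral_const_mul, integral_sq_div_one_add_sq_sq_mul (by positivity)]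
    have : 1 + |(n : ℝ)| / b = (|(n : ℝ)| + b) / b := by field_simp; ring
    rw [this]
    field_simp
    norm_num
  have hterm_int (n : ℤ) : IntegrableOn (fun x => (-1) ^ n * g n x) (Ioi 0) :=
    (((integrable_sq_div_one_add_sq_sq_mul _).const_mul _).const_mul _).integrableOn
  have hnorm (n : ℤ) (x : ℝ) : ‖(-1) ^ n * g n x‖ = g n x := by
    simp [abs_of_nonneg (hg_nonneg n x)]
  have hsummable : Summable fun n : ℤ => ∫ x in Ioi (0 : ℝ), ‖(-1) ^ n * g n x‖ := by
    simp_rw [hnorm, hg_int]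
    exact (summable_inv_abs_int_add_sq b).mul_left _
  convert! hasSum_integral_of_summable_integral_norm hterm_int hsummable using 1
  · ext n
    rw [integral_const_mul, hg_int]
  · exact setIntegral_congr_fun measurableSet_Ioi fun x (hx : 0 < x) =>
      (hasSum_two_mul_div_one_add_sq_sq_div_sinh hb.ne' hx.ne').tsum_eq.symm

lemma mul_integral_sq_div_one_add_sq_mul_cosh_div_sinh_sq_eq_tsum {b : ℝ} (hb : 0 < b) :
    π * b * ∫ x in Ioi (0 : ℝ),
        x ^ 2 / (1 + x ^ 2) * (cosh (π * b * x) / sinh (π * b * x) ^ 2) =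
      b * ∑' n : ℕ, (-1) ^ n / ((n : ℝ) + b) ^ 2 - 1 / (2 * b) := by
  have hint := hasSum_integral_two_mul_div_one_add_sq_sq_div_sinh hb
  have heven : Function.Even fun n : ℤ => (-1 : ℝ) ^ n * (b / 2 * ((|(n : ℝ)| + b) ^ 2)⁻¹) :=
    fun n => by simp [zpow_neg, ← inv_zpow]
  have hnat : HasSum (fun n : ℕ => (-1 : ℝ) ^ (n : ℤ) * (b / 2 * ((|((n : ℤ) : ℝ)| + b) ^ 2)⁻¹))
      (b / 2 * ∑' n : ℕ, (-1) ^ n / ((n : ℝ) + b) ^ 2) := by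
    have hsummable := hint.summable.comp_injective Nat.cast_injective
    convert! hsummable.hasSum
    rw [← tsum_mul_left]
    congr with n
    simp only [Function.comp_apply, zpow_natCast, Int.cast_natCast, Nat.abs_cast]
    ring
  rw [mul_integral_sq_div_one_add_sq_mul_cosh_div_sinh_sq (by positivity),
    hint.unique (hasSum_int_of_even heven hnat)]
  simp only [zpow_zero, Int.cast_zero, abs_zero, zero_add, one_mul]
  field_simp
  ring

/-- The total mass of the Nevanlinna measure
`ρ(dx) = (π/4)(x²/(1+x²)) cosh(πx/2)/sinh²(πx/2) dx` of the free-probability analogue of the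
background driving Lévy process of the hyperbolic cosine distribution equals `2K − 1`:
`(π/2) ∫₀^∞ (x²/(1+x²)) cosh(πx/2)/sinh²(πx/2) dx = 2K − 1`. -/
theorem stmt_15 :
    Real.pi / 2 *
        ∫ x in Ioi (0 : ℝ),
          x ^ 2 / (1 + x ^ 2) * (Real.cosh (Real.pi * x / 2) / Real.sinh (Real.pi * x / 2) ^ 2) =
      2 * catalanConstant - 1 := by
  have hseries : ∑' n : ℕ, (-1) ^ n / ((n : ℝ) + 1 / 2) ^ 2 = 4 * catalanConstant := by
    rw [catalanConstant, ← tsum_mul_left]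
    congr with n
    field_simp
    norm_num
  have hfreq (x : ℝ) : π * x / 2 = π * (1 / 2) * x := by ring
  have hmass := mul_integral_sq_div_one_add_sq_mul_cosh_div_sinh_sq_eq_tsum one_half_pos
  rw [hseries] at hmass
  simp_rw [hfreq]
  linear_combination hmass
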